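/- Let ⟨N, E, f⟩ be a deterministic synchronized Petri net with P = Pz ⊎ P_{s,1} ⊎ … ⊎ P_{s,n} and T = Tz ⊎ T_{s,1} ⊎ … ⊎ T_{s,n}, such that for each i every t ∈ T_{s,i} has exactly one input place ins(t) ∈ P_{s,i} and one output place outs(t) ∈ P_{s,i} with Pre(ins(t), t) = Post(outs(t), t) = 1 and Pre(p, t) = Post(p, t) = 0 for all other p ∈ P_{s,1} ∪ … ∪ P_{s,n}, and every t ∈ Tz satisfies Pre(p, t) = Post(p, t) = 0 for all p ∈ P_{s,1} ∪ … ∪ P_{s,n} (condition i). For each i let N_{s,i} be the synchronized state machine with places P_{s,i}, transitions T_{s,i} and labeling f restricted to T_{s,i}; let κ_i ∈ ℕ and let w̄_i ∈ E* be a synchronizing sequence of N_{s,i}: Ms →w̄_i M̄_{s,i} in N_{s,i} for every marking Ms of N_{s,i} with Σ_{p∈P_{s,i}} Ms(p) = κ_i. Suppose condition ii holds: for every i and every letter e of w̄_i, no t ∈ T_{s,1} ∪ … ∪ T_{s,i} with f(t) = e has an input place in Pz. For each i define M̄'_{s,i} by M̄_{s,i} →(w̄_{i+1} … w̄_n) M̄'_{s,i}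 in N_{s,i}. Then for every marking M of N with Σ_{p∈P_{s,i}} M(p) = κ_i for all i, if M →(w̄_1 w̄_2 … w̄_n) M' in N then M'(p) = M̄'_{s,i}(p) for every i and every p ∈ P_{s,i}. -/

import Mathlib

open scoped Classical BigOperators

/-- A synchronized Petri net `⟨N, E, f⟩`: `Pre`/`Post` incidence functions
and a labeling `f` of transitions by input events. -/
structure SyncPN (P T E : Type) where
  Pre : P → T → ℕ
  Post : P → T → ℕ
  f : T → E

/-- A transition `t` is enabled at marking `M` if `M(p) ≥ Pre(p,t)` for all `p`. -/
def enabled {P T E : Type} (N : SyncPN P T E) (M : P → ℕ) (t : T) : Prop :=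
  ∀ p, N.Pre p t ≤ M p

/-- Occurrence of input event `e` at marking `M`: all enabled transitions labeled `e`
fire simultaneously: `step M e (p) = M(p) + Σ Post(p,t) − Σ Pre(p,t)`,
the sums ranging over enabled transitions labeled `e`. -/
noncomputable def step {P T E : Type} [Fintype T] (N : SyncPN P T E) (M : P → ℕ)
    (e : E) : P → ℕ := fun p =>
  M p + (∑ t : T, if N.f t = e ∧ enabled N M t then N.Post p t else 0)
      - ∑ t : T, if N.f t = e ∧ enabled N M t then N.Pre p t else 0

/-- Extension of `step` to input words: `M →w stepWord N M w`. -/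
noncomputable def stepWord {P T E : Type} [Fintype T] (N : SyncPN P T E) (M : P → ℕ)
    (w : List E) : P → ℕ :=
  w.foldl (step N) M

/-- A net is deterministic if no place has two distinct output transitions
sharing the same label. -/
def deterministic {P T E : Type} (N : SyncPN P T E) : Prop :=
  ∀ (p : P) (t t' : T), t ≠ t' → 1 ≤ N.Pre p t → 1 ≤ N.Pre p t' → N.f t ≠ N.f t'

/-- A state machine: each transition `t` has single input place `ins t`
and single output place `outs t`, with arc weight 1. -/
def isSM {P T E : Type} (N : SyncPN P T E) (ins outs : T → P) : Prop :=
  (∀ p t, N.Pre p t = if p = ins t then 1 else 0) ∧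
  (∀ p t, N.Post p t = if p = outs t then 1 else 0)

/-- Strong connectedness of the associated graph of a state machine
(an arc from `ins t` to `outs t` for each transition `t`). -/
def stronglyConnected {P T : Type} (ins outs : T → P) : Prop :=
  ∀ p p' : P, Relation.ReflTransGen (fun a b => ∃ t, ins t = a ∧ outs t = b) p p'

/-- The synchronized state machine `Ns` induced by a state machine subnet
`(Ps, Ts)` with input place map `ins`, output place map `outs` and labeling `f`. -/
noncomputable def subSM {P T E : Type} (Ps : Finset P) (Ts : Finset T)
    (ins outs : T → P) (f : T → E) :
    SyncPN {p // p ∈ Ps} {t // t ∈ Ts} E where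
  Pre := fun q t => if (q : P) = ins t then 1 else 0
  Post := fun q t => if (q : P) = outs t then 1 else 0
  f := fun t => f t

theorem stepWord_append {P T E : Type} [Fintype T] (N : SyncPN P T E) (M : P → ℕ)
    (u v : List E) : stepWord N M (u ++ v) = stepWord N (stepWord N M u) v :=
  List.foldl_append

/-- In a deterministic net, simultaneous firing never consumes more tokens than available. -/
theorem sum_pre_fired_le {P T E : Type} [Fintype T] {N : SyncPN P T E}
    (hdet : deterministic N) (M : P → ℕ) (e : E) (p : P) :
    (∑ t : T, if N.f t = e ∧ enabled N M t then N.Pre p t else 0) ≤ M p := by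
  by_cases h : ∃ t, (N.f t = e ∧ enabled N M t) ∧ 1 ≤ N.Pre p t
  · obtain ⟨t, ht, hpos⟩ := h
    rw [Finset.sum_eq_single t]
    · rw [if_pos ht]
      exact ht.2 p
    · intro t' _ hne
      split_ifs with ht'
      · by_contra h0
        exact hdet p t' t hne (Nat.one_le_iff_ne_zero.2 h0) hpos (ht'.1.trans ht.1.symm)
      · rfl
    · simp
  · rw [Finset.sum_eq_zero]
    · exact Nat.zero_le _
    · intro t _
      split_ifs with ht
      · by_contra h0
        exact h ⟨t, ht, Nat.one_le_iff_ne_zero.2 h0⟩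
      · rfl

/-- A step preserves the token count of a set of places on which every transition is balanced. -/
theorem sum_step_eq {P T E : Type} [Fintype T] {N : SyncPN P T E}
    (hdet : deterministic N) {S : Finset P}
    (hbal : ∀ t, ∑ p ∈ S, N.Pre p t = ∑ p ∈ S, N.Post p t) (M : P → ℕ) (e : E) :
    ∑ p ∈ S, step N M e p = ∑ p ∈ S, M p := by
  have hsum : ∑ p ∈ S, (step N M e p +
        ∑ t : T, if N.f t = e ∧ enabled N M t then N.Pre p t else 0) =
      ∑ p ∈ S, (M p + ∑ t : T, if N.f t = e ∧ enabled N M t then N.Post p t else 0) :=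
    Finset.sum_congr rfl fun p _ =>
      Nat.sub_add_cancel ((sum_pre_fired_le hdet M e p).trans (Nat.le_add_right _ _))
  have hflow : (∑ p ∈ S, ∑ t : T, if N.f t = e ∧ enabled N M t then N.Pre p t else 0) =
      ∑ p ∈ S, ∑ t : T, if N.f t = e ∧ enabled N M t then N.Post p t else 0 := by
    rw [Finset.sum_comm, Finset.sum_comm (s := S)]
    refine Finset.sum_congr rfl fun t _ => ?_
    split_ifs
    · exact hbal t
    · rfl
  rw [Finset.sum_add_distrib, Finset.sum_add_distrib] at hsum
  omega

theorem sum_stepWord_eq {P T E : Type} [Fintype T] {N : SyncPN P T E}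
    (hdet : deterministic N) {S : Finset P}
    (hbal : ∀ t, ∑ p ∈ S, N.Pre p t = ∑ p ∈ S, N.Post p t) (M : P → ℕ) (w : List E) :
    ∑ p ∈ S, stepWord N M w p = ∑ p ∈ S, M p := by
  induction w generalizing M with
  | nil => rfl
  | cons e w ih => exact (ih (step N M e)).trans (sum_step_eq hdet hbal M e)

/-- On the places of a state machine subnet, a step of the full net is a step of the subnet,
provided the enabling of its transitions labeled `e` depends only on their places in the subnet. -/
theorem step_restrict_subSM {P T E : Type} [Fintype T] {N : SyncPN P T E}
    {Ps : Finset P} {Ts : Finset T} {ins outs : T → P}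
    (hPre : ∀ t ∈ Ts, ∀ p ∈ Ps, N.Pre p t = if p = ins t then 1 else 0)
    (hPost : ∀ t ∈ Ts, ∀ p ∈ Ps, N.Post p t = if p = outs t then 1 else 0)
    (hext : ∀ t ∉ Ts, ∀ p ∈ Ps, N.Pre p t = 0 ∧ N.Post p t = 0)
    {e : E} (he : ∀ t ∈ Ts, N.f t = e → ∀ p ∉ Ps, N.Pre p t = 0) (M : P → ℕ) :
    (fun q : {p // p ∈ Ps} => step N M e q) =
      step (subSM Ps Ts ins outs N.f) (fun q => M q) e := by
  have hen : ∀ t : {t // t ∈ Ts}, (N.f t = e ∧ enabled N M t) ↔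
      ((subSM Ps Ts ins outs N.f).f t = e ∧
        enabled (subSM Ps Ts ins outs N.f) (fun q => M q) t) := by
    intro t
    refine and_congr_right fun hft => ⟨fun h q => ?_, fun h p => ?_⟩
    · exact (hPre t t.2 q q.2).symm.le.trans (h q)
    · by_cases hp : p ∈ Ps
      · exact (hPre t t.2 p hp).le.trans (h ⟨p, hp⟩)
      · rw [he t t.2 hft p hp]
        exact Nat.zero_le _
  have hsum : ∀ (g : T → ℕ) (g' : {t // t ∈ Ts} → ℕ), (∀ t ∉ Ts, g t = 0) →
      (∀ t : {t // t ∈ Ts}, g t = g' t) →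
      (∑ t : T, if N.f t = e ∧ enabled N M t then g t else 0) =
        ∑ t : {t // t ∈ Ts}, if (subSM Ps Ts ins outs N.f).f t = e ∧
          enabled (subSM Ps Ts ins outs N.f) (fun q => M q) t then g' t else 0 := by
    intro g g' hg hgg'
    rw [← Finset.sum_subset (Finset.subset_univ Ts)
      (fun t _ ht => by rw [hg t ht, ite_self]), ← Finset.sum_coe_sort]
    refine Finset.sum_congr rfl fun t _ => ?_
    simp only [hen t, hgg' t]
  funext q
  unfold step
  rw [hsum (N.Post q) ((subSM Ps Ts ins outs N.f).Post q) (fun t ht => (hext t ht q q.2).2)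
      (fun t => hPost t t.2 q q.2),
    hsum (N.Pre q) ((subSM Ps Ts ins outs N.f).Pre q) (fun t ht => (hext t ht q q.2).1)
      (fun t => hPre t t.2 q q.2)]

theorem stepWord_restrict_subSM {P T E : Type} [Fintype T] {N : SyncPN P T E}
    {Ps : Finset P} {Ts : Finset T} {ins outs : T → P}
    (hPre : ∀ t ∈ Ts, ∀ p ∈ Ps, N.Pre p t = if p = ins t then 1 else 0)
    (hPost : ∀ t ∈ Ts, ∀ p ∈ Ps, N.Post p t = if p = outs t then 1 else 0)
    (hext : ∀ t ∉ Ts, ∀ p ∈ Ps, N.Pre p t = 0 ∧ N.Post p t = 0)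
    {w : List E} (hw : ∀ e ∈ w, ∀ t ∈ Ts, N.f t = e → ∀ p ∉ Ps, N.Pre p t = 0)
    (M : P → ℕ) :
    (fun q : {p // p ∈ Ps} => stepWord N M w q) =
      stepWord (subSM Ps Ts ins outs N.f) (fun q => M q) w := by
  induction w generalizing M with
  | nil => rfl
  | cons e w ih =>
    have hstep := step_restrict_subSM hPre hPost hext (hw e List.mem_cons_self) M
    have hrest := ih (fun e' he' => hw e' (List.mem_cons_of_mem e he')) (step N M e)
    rw [hstep] at hrest
    exact hrest

/-- A strictly increasing list splits at any of its members `i`, the part after `i`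
consisting of the members greater than `i`. -/
theorem exists_eq_append_cons_filter_lt {α : Type*} [LinearOrder α] {l : List α}
    (hl : l.Pairwise (· < ·)) {i : α} (hi : i ∈ l) :
    ∃ s, l = s ++ i :: l.filter (fun j => i < j) := by
  obtain ⟨s, t, rfl⟩ := List.append_of_mem hi
  rw [List.pairwise_append, List.pairwise_cons] at hl
  refine ⟨s, ?_⟩
  have hs : s.filter (fun j => i < j) = [] :=
    List.filter_eq_nil_iff.2 fun a ha => by
      simpa using (hl.2.2 a ha i List.mem_cons_self).le
  have ht : t.filter (fun j => i < j) = t :=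
    List.filter_eq_self.2 fun a ha => by simpa using hl.2.1.1 a ha
  rw [List.filter_append, hs, List.filter_cons_of_neg (by simp), ht, List.nil_append]

/-- Proposition 8: concatenating synchronizing sequences `w̄₁ … w̄ₙ` of `n` disjoint
state machine subnets drives the full net to a marking that, on the places of the
`i`-th subnet, equals the marking `M̄'_{s,i}` reached in the isolated subnet from
`M̄_{s,i}` under the later sequences `w̄_{i+1} … w̄ₙ`. -/
theorem multi_subnet_SS_synchronizes {P T E : Type} [Fintype P] [Fintype T]
    (n : ℕ) (N : SyncPN P T E) (hdet : deterministic N)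
    (Ps : Fin n → Finset P) (Ts : Fin n → Finset T) (ins outs : T → P)
    (hPdisj : ∀ i j, i ≠ j → Disjoint (Ps i) (Ps j))
    (hTdisj : ∀ i j, i ≠ j → Disjoint (Ts i) (Ts j))
    (hin : ∀ i, ∀ t ∈ Ts i, ins t ∈ Ps i)
    (hout : ∀ i, ∀ t ∈ Ts i, outs t ∈ Ps i)
    (hPre : ∀ i, ∀ t ∈ Ts i, ∀ j, ∀ p ∈ Ps j,
      N.Pre p t = if p = ins t then 1 else 0)
    (hPost : ∀ i, ∀ t ∈ Ts i, ∀ j, ∀ p ∈ Ps j,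
      N.Post p t = if p = outs t then 1 else 0)
    (hTz : ∀ t : T, (∀ i, t ∉ Ts i) → ∀ j, ∀ p ∈ Ps j,
      N.Pre p t = 0 ∧ N.Post p t = 0)
    (κ : Fin n → ℕ) (wbar : Fin n → List E)
    (Mbars : (i : Fin n) → {p // p ∈ Ps i} → ℕ)
    (hSS : ∀ i, ∀ Ms : {p // p ∈ Ps i} → ℕ, (∑ q, Ms q = κ i) →
      stepWord (subSM (Ps i) (Ts i) ins outs N.f) Ms (wbar i) = Mbars i)
    (hii : ∀ i, ∀ e ∈ wbar i, ∀ j, j ≤ i → ∀ t ∈ Ts j, N.f t = e →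
      ∀ p : P, (∀ j', p ∉ Ps j') → N.Pre p t = 0) :
    ∀ M : P → ℕ, (∀ i, ∑ p ∈ Ps i, M p = κ i) →
      ∀ M' : P → ℕ, stepWord N M (((List.finRange n).map wbar).flatten) = M' →
        ∀ (i : Fin n) (p : P) (hp : p ∈ Ps i),
          M' p =
            stepWord (subSM (Ps i) (Ts i) ins outs N.f) (Mbars i)
              ((((List.finRange n).filter (fun j => i < j)).map wbar).flatten)
              ⟨p, hp⟩ := by
  intro M hM M' hM' i p hp
  have hext : ∀ t ∉ Ts i, ∀ p ∈ Ps i, N.Pre p t = 0 ∧ N.Post p t = 0 := by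
    intro t ht p hp
    by_cases h : ∃ j, t ∈ Ts j
    · obtain ⟨j, hj⟩ := h
      have hji : j ≠ i := fun h => ht (h ▸ hj)
      have hne : ∀ q ∈ Ps j, p ≠ q := fun q hq hpq =>
        Finset.disjoint_left.1 (hPdisj j i hji) hq (hpq ▸ hp)
      rw [hPre j t hj i p hp, hPost j t hj i p hp, if_neg (hne _ (hin j t hj)),
        if_neg (hne _ (hout j t hj))]
      exact ⟨rfl, rfl⟩
    · exact hTz t (not_exists.1 h) i p hp
  have hbal : ∀ t, ∑ p ∈ Ps i, N.Pre p t = ∑ p ∈ Ps i, N.Post p t := by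
    intro t
    by_cases ht : t ∈ Ts i
    · rw [Finset.sum_congr rfl (hPre i t ht i), Finset.sum_congr rfl (hPost i t ht i),
        Finset.sum_ite_eq', Finset.sum_ite_eq', if_pos (hin i t ht), if_pos (hout i t ht)]
    · rw [Finset.sum_eq_zero fun p hp => (hext t ht p hp).1,
        Finset.sum_eq_zero fun p hp => (hext t ht p hp).2]
  have hlocal : ∀ k, i ≤ k → ∀ e ∈ wbar k, ∀ t ∈ Ts i, N.f t = e →
      ∀ p ∉ Ps i, N.Pre p t = 0 := by
    intro k hk e he t ht hft p hp
    by_cases h : ∃ j, p ∈ Ps j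
    · obtain ⟨j, hj⟩ := h
      rw [hPre i t ht j p hj, if_neg fun h : p = ins t => hp (h ▸ hin i t ht)]
    · exact hii k e he i hk t ht hft p (not_exists.1 h)
  obtain ⟨s, hs⟩ := exists_eq_append_cons_filter_lt (List.pairwise_lt_finRange n)
    (List.mem_finRange i)
  rw [hs, List.map_append, List.map_cons, List.flatten_append, List.flatten_cons,
    stepWord_append, stepWord_append] at hM'
  set M₁ := stepWord N M (s.map wbar).flatten
  have hcount : ∑ q : {p // p ∈ Ps i}, M₁ q = κ i := by
    rw [Finset.sum_coe_sort (Ps i) M₁, sum_stepWord_eq hdet hbal, hM i]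
  have hsync := stepWord_restrict_subSM (fun t ht => hPre i t ht i)
    (fun t ht => hPost i t ht i) hext (hlocal i le_rfl) M₁
  rw [hSS i _ hcount] at hsync
  have hlater := stepWord_restrict_subSM (fun t ht => hPre i t ht i)
    (fun t ht => hPost i t ht i) hext
    (w := (((List.finRange n).filter (fun j => i < j)).map wbar).flatten)
    (fun e he => by
      obtain ⟨l, hl, hel⟩ := List.mem_flatten.1 he
      obtain ⟨k, hk, rfl⟩ := List.mem_map.1 hl
      exact hlocal k (of_decide_eq_true (List.mem_filter.1 hk).2).le e hel)
    (stepWord N M₁ (wbar i))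
  rw [hsync] at hlater
  rw [← hM']
  exact congrFun hlater ⟨p, hp⟩
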